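/- Let s ≥ 6 and d be positive integers, a_1 = 0, a_2, ..., a_s integers with gcd of the nonzero a_i equal to 1, and B_1, ..., B_s nonempty subsets of Z/dZ with 0 ∈ B_1. Let B~ = ∪_{i=1}^s ({a_i} × B_i) ⊆ Z × Z/dZ. If |B~ + B~| < 2.5 |B~|, then max_i a_i < 1.5 s. -/

import Mathlib

open Pointwise

/-- `C` is periodic under a subgroup `H` with `N ≤ |C| + |H|`. -/
def KPer {G : Type*} [AddCommGroup G] (C : Finset G) (N : ℕ) : Prop :=
  ∃ H : AddSubgroup G, (∀ c ∈ C, ∀ h ∈ H, c + h ∈ C) ∧ N ≤ C.card + Nat.card H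

lemma kper_fiber {G : Type*} [AddCommGroup G] [Fintype G] [DecidableEq G]
    (H₁ H₂ : AddSubgroup G) (d : G) (S R D : Finset G)
    (hS : ∀ x ∈ S, x ∈ H₁) (hR : ∀ x ∈ R, x ∈ H₂)
    (hD : ∀ x ∈ S, ∀ y ∈ R, d + x + y ∈ D) :
    S.card * R.card ≤ Nat.card (H₁ ⊓ H₂ : AddSubgroup G) * D.card := by
  classical
  rw [← Finset.card_product]
  have h1 := Finset.card_le_mul_card_image (s := S ×ˢ R) (f := fun p : G × G => d + p.1 + p.2)
    (n := Nat.card (H₁ ⊓ H₂ : AddSubgroup G)) ?_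
  · refine h1.trans (Nat.mul_le_mul_left _ (Finset.card_le_card ?_))
    intro z hz
    simp only [Finset.mem_image, Finset.mem_product, Prod.exists] at hz
    obtain ⟨x, y, ⟨hx, hy⟩, rfl⟩ := hz
    exact hD x hx y hy
  · intro z hz
    obtain ⟨⟨x, y⟩, hxy, rfl⟩ := Finset.mem_image.1 hz
    rw [Finset.mem_product] at hxy
    have : Nat.card (H₁ ⊓ H₂ : AddSubgroup G)
        = (Finset.univ.filter (fun g => g ∈ H₁ ⊓ H₂)).card := by
      rw [Nat.card_eq_fintype_card, Fintype.card_subtype]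
    rw [this]
    apply Finset.card_le_card_of_injOn (fun p => p.1 - x)
    · rintro ⟨x', y'⟩ hp
      simp only [Finset.coe_filter, Finset.mem_product, Set.mem_ofPred_eq] at hp
      obtain ⟨⟨hx', hy'⟩, he⟩ := hp
      simp only [Finset.coe_filter, Finset.mem_univ, true_and, Set.mem_ofPred_eq,
        AddSubgroup.mem_inf]
      refine ⟨H₁.sub_mem (hS _ hx') (hS _ hxy.1), ?_⟩
      have : x' - x = y - y' := by
        have : x' + y' = x + y := by
          have := he
          rw [add_assoc, add_assoc] at this
          exact add_left_cancel this
        rw [sub_eq_sub_iff_add_eq_add, this, add_comm]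
      rw [this]
      exact H₂.sub_mem (hR _ hxy.2) (hR _ hy')
    · rintro ⟨x', y'⟩ hp ⟨x'', y''⟩ hq h
      simp only [Finset.coe_filter, Finset.mem_product, Set.mem_ofPred_eq] at hp hq
      have e1 : x' = x'' := by simpa using h
      have e2 := hp.2.trans hq.2.symm
      subst e1
      simp at e2
      simp [e2]

lemma kper_big {G : Type*} [AddCommGroup G] [Fintype G] [DecidableEq G]
    (K : AddSubgroup G) (R : Finset G) (hR : R.Nonempty)
    (h : ∀ r ∈ R, ∀ k ∈ K, r + k ∈ R) : Nat.card K ≤ R.card := by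
  classical
  obtain ⟨r, hr⟩ := hR
  rw [Nat.card_eq_fintype_card, ← Finset.card_univ]
  apply Finset.card_le_card_of_injOn (fun k : K => r + (k : G))
  · intro k _
    exact h r hr k k.2
  · intro x _ y _ hxy
    simpa using hxy

/-- one-sided analysis on the coset grid through `d ∈ C₁ \ C₂`. -/
lemma kper_grid {G : Type*} [AddCommGroup G] [Fintype G] [DecidableEq G]
    (H₁ H₂ : AddSubgroup G) (C₁ C₂ : Finset G)
    (h₁ : ∀ c ∈ C₁, ∀ h ∈ H₁, c + h ∈ C₁) (h₂ : ∀ c ∈ C₂, ∀ h ∈ H₂, c + h ∈ C₂)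
    (d : G) (hd1 : d ∈ C₁) (hd2 : d ∉ C₂) (m : ℕ)
    (hm : m = Nat.card (H₁ ⊓ H₂ : AddSubgroup G)) :
    Nat.card H₂ ≤ (C₁ \ C₂).card + m ∨
    Nat.card H₁ ≤ (C₂ \ C₁).card + m ∨
    Nat.card H₁ ≤ (C₁ \ C₂).card := by
  classical
  have hmpos : 0 < m := hm ▸ Nat.card_pos
  have h₁' : ∀ c, c ∉ C₁ → ∀ h ∈ H₁, c + h ∉ C₁ := fun c hc h hh hn => hc (by
    simpa using h₁ _ hn (-h) (H₁.neg_mem hh))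
  have h₂' : ∀ c, c ∉ C₂ → ∀ h ∈ H₂, c + h ∉ C₂ := fun c hc h hh hn => hc (by
    simpa using h₂ _ hn (-h) (H₂.neg_mem hh))
  set E₁ := Finset.univ.filter (fun g => g ∈ H₁) with hE₁
  set E₂ := Finset.univ.filter (fun g => g ∈ H₂) with hE₂
  have c₁ : Nat.card H₁ = E₁.card := by rw [Nat.card_eq_fintype_card, Fintype.card_subtype]
  have c₂ : Nat.card H₂ = E₂.card := by rw [Nat.card_eq_fintype_card, Fintype.card_subtype]
  set R := E₂.filter (fun h => d + h ∈ C₁)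
  set R' := E₂.filter (fun h => ¬ d + h ∈ C₁)
  set S' := E₁.filter (fun h => d + h ∈ C₂)
  set S := E₁.filter (fun h => ¬ d + h ∈ C₂)
  have hRR : R.card + R'.card = E₂.card := Finset.card_filter_add_card_filter_not _
  have hSS : S'.card + S.card = E₁.card := Finset.card_filter_add_card_filter_not _
  have f1 : S.card * R.card ≤ m * (C₁ \ C₂).card := by
    rw [hm]
    apply kper_fiber H₁ H₂ d
    · intro x hx; simp [S, E₁] at hx; exact hx.1
    · intro x hx; simp [R, E₂] at hx; exact hx.1
    · intro x hx y hy
      simp [S, E₁] at hx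
      simp [R, E₂] at hy
      rw [Finset.mem_sdiff]
      refine ⟨?_, h₂' _ hx.2 _ hy.1⟩
      rw [add_right_comm]
      exact h₁ _ hy.2 _ hx.1
  have f2 : S'.card * R'.card ≤ m * (C₂ \ C₁).card := by
    rw [hm]
    apply kper_fiber H₁ H₂ d
    · intro x hx; simp [S', E₁] at hx; exact hx.1
    · intro x hx; simp [R', E₂] at hx; exact hx.1
    · intro x hx y hy
      simp [S', E₁] at hx
      simp [R', E₂] at hy
      rw [Finset.mem_sdiff]
      refine ⟨h₂ _ hx.2 _ hy.1, ?_⟩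
      rw [add_right_comm]
      exact h₁' _ hy.2 _ hx.1
  have gR : R.Nonempty → m ≤ R.card := fun h => hm ▸ kper_big _ R h (by
    intro r hr k hk
    simp [R, E₂] at hr ⊢
    rw [← add_assoc]
    exact ⟨H₂.add_mem hr.1 hk.2, h₁ _ hr.2 _ hk.1⟩)
  have gR' : R'.Nonempty → m ≤ R'.card := fun h => hm ▸ kper_big _ R' h (by
    intro r hr k hk
    simp [R', E₂] at hr ⊢
    rw [← add_assoc]
    exact ⟨H₂.add_mem hr.1 hk.2, h₁' _ hr.2 _ hk.1⟩)
  have gS : S.Nonempty → m ≤ S.card := fun h => hm ▸ kper_big _ S h (by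
    intro r hr k hk
    simp [S, E₁] at hr ⊢
    rw [← add_assoc]
    exact ⟨H₁.add_mem hr.1 hk.1, h₂' _ hr.2 _ hk.2⟩)
  have gS' : S'.Nonempty → m ≤ S'.card := fun h => hm ▸ kper_big _ S' h (by
    intro r hr k hk
    simp [S', E₁] at hr ⊢
    rw [← add_assoc]
    exact ⟨H₁.add_mem hr.1 hk.1, h₂ _ hr.2 _ hk.2⟩)
  have nR := gR ⟨0, by simp [R, E₂, hd1, H₂.zero_mem]⟩
  have nS := gS ⟨0, by simp [S, E₁, hd2, H₁.zero_mem]⟩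
  rw [c₁, c₂]
  rcases R'.eq_empty_or_nonempty with e | e
  · left
    rw [e] at hRR
    simp at hRR
    rw [← hRR]
    have : m * R.card ≤ m * (C₁ \ C₂).card := (Nat.mul_le_mul_right _ nS).trans f1
    have := Nat.le_of_mul_le_mul_left this hmpos
    omega
  have nR' := gR' e
  rcases S'.eq_empty_or_nonempty with e | e
  · right; right
    rw [e] at hSS
    simp at hSS
    rw [← hSS]
    have : m * S.card ≤ m * (C₁ \ C₂).card := by
      refine le_trans ?_ f1
      rw [mul_comm]
      exact (Nat.mul_le_mul_left _ nR)
    exact Nat.le_of_mul_le_mul_left this hmpos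
  have nS' := gS' e
  rcases le_total R'.card S.card with hle | hle
  · left
    rw [← hRR]
    refine le_of_mul_le_mul_left (a := m) ?_ hmpos
    have : R'.card * R.card ≤ m * (C₁ \ C₂).card := (Nat.mul_le_mul_right _ hle).trans f1
    nlinarith
  · right; left
    rw [← hSS]
    refine le_of_mul_le_mul_left (a := m) ?_ hmpos
    have : S'.card * S.card ≤ m * (C₂ \ C₁).card := (Nat.mul_le_mul_left _ hle).trans f2
    nlinarith

lemma kper_union {G : Type*} [AddCommGroup G] [Fintype G] [DecidableEq G]
    (C₁ C₂ : Finset G) (N : ℕ) (hC₁ : KPer C₁ N) (hC₂ : KPer C₂ N) : KPer (C₁ ∪ C₂) N := by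
  by_cases s1 : C₁ ⊆ C₂
  · rwa [Finset.union_eq_right.2 s1]
  by_cases s2 : C₂ ⊆ C₁
  · rwa [Finset.union_eq_left.2 s2]
  obtain ⟨d, hd1, hd2⟩ := Finset.not_subset.1 s1
  obtain ⟨e, he1, he2⟩ := Finset.not_subset.1 s2
  obtain ⟨H₁, p1, n1⟩ := hC₁
  obtain ⟨H₂, p2, n2⟩ := hC₂
  refine ⟨H₁ ⊓ H₂, ?_, ?_⟩
  · intro c hc h hh
    rw [Finset.mem_union] at hc ⊢
    exact hc.imp (fun t => p1 _ t _ hh.1) (fun t => p2 _ t _ hh.2)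
  · have g1 := kper_grid H₁ H₂ C₁ C₂ p1 p2 d hd1 hd2 _ rfl
    have g2 := kper_grid H₂ H₁ C₂ C₁ p2 p1 e he1 he2 _ rfl
    rw [inf_comm H₂ H₁] at g2
    have u1 : (C₁ ∪ C₂).card = C₁.card + (C₂ \ C₁).card := by
      rw [← Finset.card_union_of_disjoint Finset.disjoint_sdiff, Finset.union_sdiff_self_eq_union]
    have u2 : (C₁ ∪ C₂).card = C₂.card + (C₁ \ C₂).card := by
      rw [← Finset.card_union_of_disjoint Finset.disjoint_sdiff, Finset.union_sdiff_self_eq_union,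
        Finset.union_comm]
    omega

lemma kper_weak {G : Type*} [AddCommGroup G] [Fintype G] [DecidableEq G] (n : ℕ) :
    ∀ A B : Finset G, B.card ≤ n → (0 : G) ∈ B →
      ∃ C, A ⊆ C ∧ C ⊆ A + B ∧ KPer C (A.card + B.card) := by
  induction n with
  | zero =>
    intro A B hB h0
    have := Finset.card_pos.2 ⟨0, h0⟩
    omega
  | succ n ih =>
    intro A B hB h0
    by_cases hAB : ∀ a ∈ A, ∀ b ∈ B, a + b ∈ A
    · refine ⟨A, subset_rfl, fun a ha => Finset.mem_add.2 ⟨a, ha, 0, h0, add_zero a⟩,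
        AddAction.stabilizer G A, ?_, ?_⟩
      · intro c hc h hh
        rw [AddAction.mem_stabilizer_iff] at hh
        have := Finset.vadd_mem_vadd_finset (a := h) hc
        rw [hh] at this
        simpa [add_comm] using this
      · apply Nat.add_le_add_left
        have hsub : ∀ b ∈ B, b ∈ AddAction.stabilizer G A := by
          intro b hb
          rw [AddAction.mem_stabilizer_iff]
          apply Finset.eq_of_subset_of_card_le
          · intro z hz
            obtain ⟨y, hy, rfl⟩ := Finset.mem_vadd_finset.1 hz
            rw [vadd_eq_add, add_comm]
            exact hAB y hy b hb
          · simp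
        have hc : Nat.card (B : Set G) = B.card := by simp
        rw [← hc]
        exact Nat.card_mono (Set.toFinite (AddAction.stabilizer G A : Set G)) hsub
    · push Not at hAB
      obtain ⟨a, ha, b, hb, hab⟩ := hAB
      set B' := B.filter (fun x => a + x ∈ A) with hB'
      set A' := A ∪ (a +ᵥ B) with hA'
      have hlt : B'.card < B.card := Finset.card_lt_card
        (Finset.filter_ssubset.2 ⟨b, hb, hab⟩)
      obtain ⟨C, c1, c2, c3⟩ := ih A' B' (by omega) (by simp [hB', h0, ha])
      refine ⟨C, (Finset.subset_union_left).trans c1, c2.trans ?_, ?_⟩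
      · intro z hz
        obtain ⟨x, hx, y, hy, rfl⟩ := Finset.mem_add.1 hz
        rw [hB', Finset.mem_filter] at hy
        rcases Finset.mem_union.1 hx with hx | hx
        · exact Finset.add_mem_add hx hy.1
        · obtain ⟨w, hw, rfl⟩ := Finset.mem_vadd_finset.1 hx
          rw [vadd_eq_add, add_right_comm]
          exact Finset.add_mem_add hy.2 hw
      · have e1 : (A ∩ (a +ᵥ B)).card = B'.card := by
          rw [← Finset.card_vadd_finset a B']
          congr 1
          ext z
          simp only [Finset.mem_inter, Finset.mem_vadd_finset, hB', Finset.mem_filter, vadd_eq_add]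
          constructor
          · rintro ⟨h, y, hy, rfl⟩
            exact ⟨y, ⟨hy, h⟩, rfl⟩
          · rintro ⟨y, ⟨hy, h⟩, rfl⟩
            exact ⟨h, y, hy, rfl⟩
        have e2 := Finset.card_union_add_card_inter A (a +ᵥ B)
        rw [Finset.card_vadd_finset, e1] at e2
        rwa [hA', e2] at c3

lemma kper_sum {G : Type*} [AddCommGroup G] [Fintype G] [DecidableEq G]
    (A B : Finset G) (hA : A.Nonempty) (hB : B.Nonempty) : KPer (A + B) (A.card + B.card) := by
  classical
  have key : ∀ c ∈ A + B, ∃ C, c ∈ C ∧ C ⊆ A + B ∧ KPer C (A.card + B.card) := by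
    intro c hc
    obtain ⟨a, ha, b, hb, rfl⟩ := Finset.mem_add.1 hc
    obtain ⟨C, c1, c2, H, p, q⟩ := kper_weak _ A (-b +ᵥ B) le_rfl
      (Finset.mem_vadd_finset.2 ⟨b, hb, by simp⟩)
    refine ⟨b +ᵥ C, ?_, ?_, H, ?_, ?_⟩
    · exact Finset.mem_vadd_finset.2 ⟨a, c1 ha, by simp [add_comm]⟩
    · intro z hz
      obtain ⟨w, hw, rfl⟩ := Finset.mem_vadd_finset.1 hz
      obtain ⟨x, hx, y, hy, rfl⟩ := Finset.mem_add.1 (c2 hw)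
      obtain ⟨v, hv, rfl⟩ := Finset.mem_vadd_finset.1 hy
      refine Finset.mem_add.2 ⟨x, hx, v, hv, ?_⟩
      simp only [vadd_eq_add]
      abel
    · intro c hc h hh
      obtain ⟨w, hw, rfl⟩ := Finset.mem_vadd_finset.1 hc
      exact Finset.mem_vadd_finset.2 ⟨w + h, p _ hw _ hh, by simp [add_assoc]⟩
    · simpa using q
  have key2 : ∀ s : Finset G, s.Nonempty → s ⊆ A + B →
      ∃ C, s ⊆ C ∧ C ⊆ A + B ∧ KPer C (A.card + B.card) := by
    intro s hs
    induction hs using Finset.Nonempty.cons_induction with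
    | singleton a =>
      intro h
      obtain ⟨C, h1, h2, h3⟩ := key a (h (Finset.mem_singleton_self a))
      exact ⟨C, Finset.singleton_subset_iff.2 h1, h2, h3⟩
    | cons a s ha hs ih =>
      intro h
      rw [Finset.cons_eq_insert, Finset.insert_subset_iff] at h
      obtain ⟨C, h1, h2, h3⟩ := key a h.1
      obtain ⟨D, g1, g2, g3⟩ := ih h.2
      refine ⟨C ∪ D, ?_, Finset.union_subset h2 g2, kper_union _ _ _ h3 g3⟩
      rw [Finset.cons_eq_insert, Finset.insert_subset_iff]
      exact ⟨Finset.mem_union_left _ h1, g1.trans Finset.subset_union_right⟩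
  obtain ⟨C, h1, h2, h3⟩ := key2 (A + B) (hA.add hB) subset_rfl
  rwa [Finset.Subset.antisymm h2 h1] at h3

/-- The theorem of Kneser, where E is the underlying finset of the stabilizer. -/
lemma kneser {G : Type*} [AddCommGroup G] [Fintype G] [DecidableEq G]
    (A B : Finset G) (hA : A.Nonempty) (hB : B.Nonempty) :
    ∃ (H : AddSubgroup G) (E : Finset G), (∀ g, g ∈ E ↔ g ∈ H) ∧
      (∀ c ∈ A + B, ∀ h ∈ E, c + h ∈ A + B) ∧
      (A + E).card + (B + E).card ≤ (A + B).card + E.card := by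
  classical
  set H := AddAction.stabilizer G (A + B)
  have hper : ∀ c ∈ A + B, ∀ h ∈ H, c + h ∈ A + B := by
    intro c hc h hh
    rw [AddAction.mem_stabilizer_iff] at hh
    have := Finset.vadd_mem_vadd_finset (a := h) hc
    rw [hh] at this
    simpa [add_comm] using this
  set E := Finset.univ.filter (fun g => g ∈ H) with hE
  have hE' : ∀ g, g ∈ E ↔ g ∈ H := by simp [hE]
  have hEn : E.Nonempty := ⟨0, by simp [hE, H.zero_mem]⟩
  refine ⟨H, E, hE', fun c hc h hh => hper c hc h ((hE' h).1 hh), ?_⟩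
  have hsum : (A + E) + (B + E) = A + B := by
    apply Finset.Subset.antisymm
    · intro z hz
      obtain ⟨x, hx, y, hy, rfl⟩ := Finset.mem_add.1 hz
      obtain ⟨a, ha, e, he, rfl⟩ := Finset.mem_add.1 hx
      obtain ⟨b, hb, f, hf, rfl⟩ := Finset.mem_add.1 hy
      rw [add_add_add_comm]
      exact hper _ (Finset.add_mem_add ha hb) _ (H.add_mem ((hE' _).1 he) ((hE' _).1 hf))
    · intro z hz
      obtain ⟨x, hx, y, hy, rfl⟩ := Finset.mem_add.1 hz
      have h0 : (0 : G) ∈ E := (hE' _).2 H.zero_mem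
      refine Finset.add_mem_add ?_ ?_
      · simpa using Finset.add_mem_add hx h0
      · simpa using Finset.add_mem_add hy h0
  obtain ⟨K, k1, k2⟩ := kper_sum (A + E) (B + E) (hA.add hEn) (hB.add hEn)
  rw [hsum] at k1 k2
  refine k2.trans (Nat.add_le_add_left ?_ _)
  have : E.card = Nat.card H := by rw [Nat.card_eq_fintype_card, Fintype.card_subtype]
  rw [this]
  refine Nat.card_mono (Set.toFinite (H : Set G)) ?_
  intro k hk
  change k ∈ H
  rw [AddAction.mem_stabilizer_iff]
  apply Finset.eq_of_subset_of_card_le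
  · intro z hz
    obtain ⟨y, hy, rfl⟩ := Finset.mem_vadd_finset.1 hz
    rw [vadd_eq_add, add_comm k y]
    exact k1 y hy k hk
  · simp

lemma lev_inj (l : ℕ) (Y : Finset ℤ) (hY : ∀ y ∈ Y, 0 ≤ y ∧ y ≤ l) :
    Y.card ≤ (Y.image (Int.castAddHom (ZMod l))).card + 1 := by
  have h1 : (Y.erase (l : ℤ)).card ≤ (Y.image (Int.castAddHom (ZMod l))).card := by
    apply Finset.card_le_card_of_injOn (Int.castAddHom (ZMod l))
    · intro y hy
      exact Finset.mem_coe.2 (Finset.mem_image_of_mem _ (Finset.mem_of_mem_erase hy))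
    · intro x hx y hy hxy
      simp only [Finset.coe_erase, Set.mem_diff, Finset.mem_coe, Set.mem_singleton_iff] at hx hy
      simp only [Int.coe_castAddHom] at hxy
      rw [ZMod.intCast_eq_intCast_iff'] at hxy
      have := hY x hx.1
      have := hY y hy.1
      rwa [Int.emod_eq_of_lt (by omega) (by omega), Int.emod_eq_of_lt (by omega) (by omega)] at hxy
  have := Finset.pred_card_le_card_erase (s := Y) (a := (l : ℤ))
  omega

lemma lev_hole {G : Type*} [AddCommGroup G] [DecidableEq G] (φ : ℤ →+ G)
    (H : AddSubgroup G) (E : Finset G) (hE : ∀ g, g ∈ E ↔ g ∈ H)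
    (Y : Finset ℤ) (y₀ : ℤ) (hy₀ : y₀ ∈ Y) :
    (Y.image φ).card + E.card ≤
      (Y.image φ + E).card + (Y.filter (fun y => φ y - φ y₀ ∈ E)).card := by
  have h0 : (0 : G) ∈ E := (hE _).2 H.zero_mem
  have h1 : Y.image φ ∪ (φ y₀ +ᵥ E) ⊆ Y.image φ + E := by
    intro z hz
    rcases Finset.mem_union.1 hz with hz | hz
    · simpa using Finset.add_mem_add hz h0
    · obtain ⟨e, he, rfl⟩ := Finset.mem_vadd_finset.1 hz
      exact Finset.add_mem_add (Finset.mem_image_of_mem _ hy₀) he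
  have h2 : Y.image φ ∩ (φ y₀ +ᵥ E) ⊆ (Y.filter (fun y => φ y - φ y₀ ∈ E)).image φ := by
    intro z hz
    obtain ⟨hz1, hz2⟩ := Finset.mem_inter.1 hz
    obtain ⟨y, hy, rfl⟩ := Finset.mem_image.1 hz1
    obtain ⟨e, he, he'⟩ := Finset.mem_vadd_finset.1 hz2
    refine Finset.mem_image_of_mem _ (Finset.mem_filter.2 ⟨hy, ?_⟩)
    rw [← he']
    simpa using he
  have h3 := Finset.card_le_card h1
  have h4 := (Finset.card_le_card h2).trans Finset.card_image_le
  have h5 := Finset.card_union_add_card_inter (Y.image φ) (φ y₀ +ᵥ E)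
  rw [Finset.card_vadd_finset] at h5
  omega

lemma lev_fiber (l : ℕ) (hl : 0 < l) (A X : Finset ℤ) (h0 : 0 ∈ A) (hlA : (l : ℤ) ∈ A)
    (D : Finset (ZMod l))
    (hD : D ⊆ A.image (Int.castAddHom (ZMod l)) + X.image (Int.castAddHom (ZMod l))) :
    D.card + (X.filter (fun x => Int.castAddHom (ZMod l) x ∈ D)).card ≤
      ((A + X).filter (fun x => Int.castAddHom (ZMod l) x ∈ D)).card := by
  set φ := Int.castAddHom (ZMod l) with hφ
  have hφl : φ (l : ℤ) = 0 := by simp [hφ]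
  have e1 : ∀ S : Finset ℤ, (S.filter (fun x => φ x ∈ D)).card =
      ∑ c ∈ D, (S.filter (fun x => φ x = c)).card := by
    intro S
    rw [Finset.card_eq_sum_card_fiberwise (f := φ) (t := D)]
    · apply Finset.sum_congr rfl
      intro c hc
      congr 1
      ext x
      simp only [Finset.mem_filter]
      constructor
      · rintro ⟨⟨a, b⟩, c⟩; exact ⟨a, c⟩
      · rintro ⟨a, rfl⟩; exact ⟨⟨a, hc⟩, rfl⟩
    · intro x hx
      exact Finset.mem_coe.2 (Finset.mem_filter.1 (Finset.mem_coe.1 hx)).2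
  rw [e1, e1, Finset.card_eq_sum_ones, ← Finset.sum_add_distrib]
  apply Finset.sum_le_sum
  intro c hc
  rcases (X.filter (fun x => φ x = c)).eq_empty_or_nonempty with e | e
  · rw [e]
    simp only [Finset.card_empty, add_zero]
    obtain ⟨u, hu, v, hv, huv⟩ := Finset.mem_add.1 (hD hc)
    obtain ⟨a, ha, rfl⟩ := Finset.mem_image.1 hu
    obtain ⟨x, hx, rfl⟩ := Finset.mem_image.1 hv
    apply Finset.card_pos.2
    refine ⟨a + x, Finset.mem_filter.2 ⟨Finset.add_mem_add ha hx, ?_⟩⟩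
    rw [map_add, huv]
  · have h1 := cauchy_davenport_add_of_linearOrder_isCancelAdd (s := {0, (l : ℤ)})
      (t := X.filter (fun x => φ x = c)) (by simp) e
    have h2 : ({0, (l : ℤ)} : Finset ℤ).card = 2 := Finset.card_pair (by omega)
    rw [h2] at h1
    have h3 : {0, (l : ℤ)} + X.filter (fun x => φ x = c) ⊆ (A + X).filter (fun x => φ x = c) := by
      intro z hz
      obtain ⟨u, hu, v, hv, rfl⟩ := Finset.mem_add.1 hz
      obtain ⟨hv1, hv2⟩ := Finset.mem_filter.1 hv
      rw [Finset.mem_insert, Finset.mem_singleton] at hu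
      rw [Finset.mem_filter]
      rcases hu with rfl | rfl
      · exact ⟨Finset.add_mem_add h0 hv1, by simp [hv2]⟩
      · exact ⟨Finset.add_mem_add hlA hv1, by rw [map_add, hφl, hv2, zero_add]⟩
    have h4 := Finset.card_le_card h3
    omega

lemma lev (l : ℕ) (hl : 0 < l) (A X : Finset ℤ) (h0 : 0 ∈ A) (hlA : (l : ℤ) ∈ A)
    (hA : ∀ a ∈ A, 0 ≤ a ∧ a ≤ l) (hX : ∀ x ∈ X, 0 ≤ x ∧ x ≤ l) (hXn : X.Nonempty)
    (hgen : ∀ K : AddSubgroup ℤ, (∀ a ∈ A, a ∈ K) → K = ⊤) :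
    l + X.card ≤ (A + X).card ∨ A.card + 2 * X.card ≤ (A + X).card + 3 := by
  haveI : NeZero l := ⟨hl.ne'⟩
  have iA := lev_inj l A hA
  have iX := lev_inj l X hX
  have fib := lev_fiber l hl A X h0 hlA
  set φ := Int.castAddHom (ZMod l) with hφ
  have hAn : A.Nonempty := ⟨0, h0⟩
  obtain ⟨H, E, hE, hper, hk⟩ := kneser (A.image φ) (X.image φ) (hAn.image _) (hXn.image _)
  set C := A.image φ + X.image φ with hC
  have hE0 : (0 : ZMod l) ∈ E := (hE _).2 H.zero_mem
  by_cases hH : H = ⊤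
  · left
    have hCu : C = Finset.univ := by
      obtain ⟨c, hc⟩ : C.Nonempty := (hAn.image _).add (hXn.image _)
      rw [Finset.eq_univ_iff_forall]
      intro z
      have := hper c hc (z - c) ((hE _).2 (by simp [hH]))
      simpa using this
    have := fib Finset.univ (by rw [hCu])
    simpa [ZMod.card] using this
  right
  obtain ⟨a1, ha1, ha1'⟩ : ∃ a ∈ A, φ a ∉ H := by
    by_contra hcon
    push Not at hcon
    apply hH
    have := hgen (H.comap φ) (fun a ha => hcon a ha)
    rw [eq_top_iff]
    intro z _
    obtain ⟨w, rfl⟩ := ZMod.intCast_surjective z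
    have hw : w ∈ H.comap φ := by rw [this]; trivial
    exact hw
  have h2E : E.card + E.card ≤ (A.image φ + E).card := by
    have hdis : Disjoint E (φ a1 +ᵥ E) := by
      rw [Finset.disjoint_left]
      intro z hz hz'
      obtain ⟨e, he, rfl⟩ := Finset.mem_vadd_finset.1 hz'
      rw [hE] at hz he
      apply ha1'
      simpa using H.sub_mem hz he
    have := Finset.card_union_of_disjoint hdis
    rw [Finset.card_vadd_finset] at this
    rw [← this]
    apply Finset.card_le_card
    apply Finset.union_subset
    · intro e he
      have := Finset.add_mem_add (Finset.mem_image_of_mem φ h0) he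
      simpa using this
    · intro z hz
      obtain ⟨e, he, rfl⟩ := Finset.mem_vadd_finset.1 hz
      exact Finset.add_mem_add (Finset.mem_image_of_mem φ ha1) he
  have hEpos : 0 < E.card := Finset.card_pos.2 ⟨0, hE0⟩
  obtain ⟨c0, hc0, hc0'⟩ : ∃ c ∈ C, c ∉ X.image φ + E :=
    Finset.exists_mem_notMem_of_card_lt_card (by omega)
  obtain ⟨u, hu, v, hv, huv⟩ := Finset.mem_add.1 hc0
  obtain ⟨a0, ha0, rfl⟩ := Finset.mem_image.1 hu
  obtain ⟨x0, hx0, rfl⟩ := Finset.mem_image.1 hv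
  have holeA := lev_hole φ H E hE A a0 ha0
  have holeX := lev_hole φ H E hE X x0 hx0
  set A0 := A.filter (fun y => φ y - φ a0 ∈ E)
  set X0 := X.filter (fun y => φ y - φ x0 ∈ E)
  set K := c0 +ᵥ E with hK
  have hKC : K ⊆ C := by
    intro z hz
    obtain ⟨e, he, rfl⟩ := Finset.mem_vadd_finset.1 hz
    exact hper _ hc0 _ he
  have hKc : K.card = E.card := Finset.card_vadd_finset _ _
  have f1 := fib (C \ K) Finset.sdiff_subset
  have f2 : X.filter (fun x => φ x ∈ C \ K) = X := by
    apply Finset.filter_true_of_mem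
    intro x hx
    rw [Finset.mem_sdiff]
    constructor
    · have := Finset.add_mem_add (Finset.mem_image_of_mem φ h0) (Finset.mem_image_of_mem φ hx)
      simpa using this
    · intro hxK
      obtain ⟨e, he, he'⟩ := Finset.mem_vadd_finset.1 hxK
      apply hc0'
      refine Finset.mem_add.2 ⟨φ x, Finset.mem_image_of_mem φ hx, -e,
        (hE _).2 (H.neg_mem ((hE _).1 he)), ?_⟩
      rw [← he', vadd_eq_add]
      abel
  rw [f2, Finset.card_sdiff_of_subset hKC] at f1
  have f3 : A0.card + X0.card - 1 ≤ ((A + X).filter (fun x => φ x ∈ K)).card := by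
    refine (cauchy_davenport_add_of_linearOrder_isCancelAdd (s := A0) (t := X0)
      ⟨a0, Finset.mem_filter.2 ⟨ha0, by simpa using hE0⟩⟩
      ⟨x0, Finset.mem_filter.2 ⟨hx0, by simpa using hE0⟩⟩).trans (Finset.card_le_card ?_)
    intro z hz
    obtain ⟨u, hu, v, hv, rfl⟩ := Finset.mem_add.1 hz
    obtain ⟨hu1, hu2⟩ := Finset.mem_filter.1 hu
    obtain ⟨hv1, hv2⟩ := Finset.mem_filter.1 hv
    refine Finset.mem_filter.2 ⟨Finset.add_mem_add hu1 hv1, ?_⟩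
    rw [hK, Finset.mem_vadd_finset]
    refine ⟨(φ u - φ a0) + (φ v - φ x0),
      (hE _).2 (H.add_mem ((hE _).1 hu2) ((hE _).1 hv2)), ?_⟩
    rw [vadd_eq_add, ← huv, map_add]
    abel
  have f4 : ((A + X).filter (fun x => φ x ∈ C \ K)).card +
      ((A + X).filter (fun x => φ x ∈ K)).card ≤ (A + X).card := by
    rw [← Finset.card_union_of_disjoint]
    · exact Finset.card_le_card
        (Finset.union_subset (Finset.filter_subset _ _) (Finset.filter_subset _ _))
    · rw [Finset.disjoint_left]
      intro z hz hz'
      exact (Finset.mem_sdiff.1 (Finset.mem_filter.1 hz).2).2 (Finset.mem_filter.1 hz').2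
  have f5 := Finset.card_le_card hKC
  omega

/-- The translated consequence that is used: doubling at least 5/2 against every subset. -/
lemma lev_sub (A X : Finset ℤ) (m M : ℤ) (hm : m ∈ A) (hM : M ∈ A)
    (hA : ∀ a ∈ A, m ≤ a ∧ a ≤ M) (hXA : X ⊆ A)
    (hgen : ∀ K : AddSubgroup ℤ, (∀ a ∈ A, a - m ∈ K) → K = ⊤)
    (hs : 6 ≤ A.card) (hlen : 3 * (A.card : ℤ) ≤ 2 * (M - m)) :
    5 * X.card ≤ 2 * (A + X).card := by
  rcases X.eq_empty_or_nonempty with rfl | hXn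
  · simp
  obtain ⟨l, hl⟩ : ∃ l : ℕ, (l : ℤ) = M - m := ⟨(M - m).toNat, by
    have := (hA M hM).1; omega⟩
  have key := lev l (by omega) (-m +ᵥ A) (-m +ᵥ X)
    (Finset.mem_vadd_finset.2 ⟨m, hm, by simp⟩)
    (Finset.mem_vadd_finset.2 ⟨M, hM, by rw [vadd_eq_add]; omega⟩)
    (by
      intro a ha
      obtain ⟨b, hb, rfl⟩ := Finset.mem_vadd_finset.1 ha
      have := hA b hb
      rw [vadd_eq_add]; omega)
    (by
      intro a ha
      obtain ⟨b, hb, rfl⟩ := Finset.mem_vadd_finset.1 ha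
      have := hA b (hXA hb)
      rw [vadd_eq_add]; omega)
    (hXn.vadd_finset)
    (by
      intro K hK
      apply hgen K
      intro a ha
      have := hK (-m +ᵥ a) (Finset.vadd_mem_vadd_finset ha)
      rwa [vadd_eq_add, neg_add_eq_sub] at this)
  have e : (-m +ᵥ A) + (-m +ᵥ X) = (-m + -m) +ᵥ (A + X) := by
    ext z
    simp only [Finset.mem_add, Finset.mem_vadd_finset, vadd_eq_add]
    constructor
    · rintro ⟨_, ⟨a, ha, rfl⟩, _, ⟨x, hx, rfl⟩, rfl⟩
      exact ⟨a + x, ⟨a, ha, x, hx, rfl⟩, by ring⟩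
    · rintro ⟨_, ⟨a, ha, x, hx, rfl⟩, rfl⟩
      exact ⟨_, ⟨a, ha, rfl⟩, _, ⟨x, hx, rfl⟩, by ring⟩
  rw [e] at key
  simp only [Finset.card_vadd_finset] at key
  have := Finset.card_le_card hXA
  omega

open Pointwise

theorem max_bound_of_small_doubling (s d : ℕ) (hs : 6 ≤ s) (hd : 0 < d)
    (a : ℕ → ℤ) (ha0 : a 0 = 0)
    (hinj : ∀ i < s, ∀ j < s, a i = a j → i = j)
    (hgcd : (Finset.range s).gcd a = 1)
    (B : ℕ → Finset (ZMod d)) (hBne : ∀ i < s, (B i).Nonempty) (h0B : (0 : ZMod d) ∈ B 0)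
    (Btil : Finset (ℤ × ZMod d))
    (hBtil : Btil = (Finset.range s).biUnion (fun i => {a i} ×ˢ B i))
    (hdbl : 2 * (Btil + Btil).card < 5 * Btil.card) :
    ∀ i < s, 2 * a i < 3 * (s : ℤ) := by
  classical
  intro i hi
  by_contra hcon
  push Not at hcon
  haveI : NeZero d := ⟨hd.ne'⟩
  set A := (Finset.range s).image a with hA
  have h0A : (0 : ℤ) ∈ A := Finset.mem_image.2 ⟨0, Finset.mem_range.2 (by omega), ha0⟩
  have hAn : A.Nonempty := ⟨0, h0A⟩
  have hcard : A.card = s := by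
    rw [hA, Finset.card_image_of_injOn, Finset.card_range]
    intro x hx y hy hxy
    exact hinj x (by simpa using hx) y (by simpa using hy) hxy
  -- the inequality for subsets
  have hsub : ∀ X ⊆ A, 5 * X.card ≤ 2 * (A + X).card := by
    intro X hX
    apply lev_sub A X (A.min' hAn) (A.max' hAn) (A.min'_mem hAn) (A.max'_mem hAn)
      (fun x hx => ⟨A.min'_le x hx, A.le_max' x hx⟩) hX
    · intro K hK
      have hmK : A.min' hAn ∈ K := by
        have := hK 0 h0A
        rw [zero_sub] at this
        exact neg_mem_iff.1 this
      have hK' : ∀ x ∈ A, x ∈ K := fun x hx => by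
        simpa using K.add_mem (hK x hx) hmK
      obtain ⟨g, hg⟩ := Int.subgroup_cyclic K
      have hdiv : g ∣ (Finset.range s).gcd a := by
        apply Finset.dvd_gcd
        intro j hj
        have := hK' (a j) (Finset.mem_image_of_mem a hj)
        rw [hg] at this
        exact Int.mem_zmultiples_iff.1 (by rwa [AddSubgroup.zmultiples_eq_closure])
      rw [hgcd] at hdiv
      have h1 : (1 : ℤ) ∈ K := by
        rw [hg, ← AddSubgroup.zmultiples_eq_closure]
        exact Int.mem_zmultiples_iff.2 hdiv
      rw [eq_top_iff]
      intro z _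
      simpa using K.zsmul_mem h1 z
    · omega
    · rw [hcard]
      have h1 := A.min'_le 0 h0A
      have h2 := A.le_max' (a i) (Finset.mem_image_of_mem a (Finset.mem_range.2 hi))
      omega
  -- fibres
  let F : Finset (ℤ × ZMod d) → ℤ → Finset (ZMod d) :=
    fun S n => Finset.univ.filter (fun y => (n, y) ∈ S)
  have hF : ∀ S n y, y ∈ F S n ↔ (n, y) ∈ S := by simp [F]
  have hFle : ∀ S n, (F S n).card ≤ d := fun S n => by
    simpa [ZMod.card] using Finset.card_le_univ (F S n)
  have hFS : ∀ (S : Finset (ℤ × ZMod d)) (T : Finset ℤ), (∀ p ∈ S, p.1 ∈ T) →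
      S.card = ∑ t ∈ Finset.range d, (T.filter (fun n => t < (F S n).card)).card := by
    intro S T hT
    have e1 : S.card = ∑ n ∈ T, (F S n).card := by
      rw [Finset.card_eq_sum_card_fiberwise (f := Prod.fst) (t := T) (fun p hp => hT p hp)]
      apply Finset.sum_congr rfl
      intro n _
      symm
      apply Finset.card_bij (fun y _ => ((n, y) : ℤ × ZMod d))
      · intro y hy
        simpa using (hF _ _ _).1 hy
      · intro y _ z _ h
        simpa using h
      · rintro ⟨n', y⟩ hy
        rw [Finset.mem_filter] at hy
        obtain ⟨hy1, rfl⟩ := hy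
        exact ⟨y, (hF _ _ _).2 hy1, rfl⟩
    rw [e1]
    simp only [Finset.card_filter]
    rw [Finset.sum_comm]
    apply Finset.sum_congr rfl
    intro n _
    rw [← Finset.card_filter]
    have : (Finset.range d).filter (fun t => t < (F S n).card) = Finset.range (F S n).card := by
      ext t
      have := hFle S n
      simp only [Finset.mem_filter, Finset.mem_range]
      omega
    rw [this, Finset.card_range]
  have hBA : ∀ p ∈ Btil, p.1 ∈ A := by
    intro p hp
    rw [hBtil] at hp
    simp only [Finset.mem_biUnion, Finset.mem_product, Finset.mem_singleton] at hp
    obtain ⟨j, hj, h1, _⟩ := hp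
    rw [h1]
    exact Finset.mem_image_of_mem a hj
  have hFne : ∀ n ∈ A, (F Btil n).Nonempty := by
    intro n hn
    obtain ⟨j, hj, rfl⟩ := Finset.mem_image.1 hn
    obtain ⟨y, hy⟩ := hBne j (Finset.mem_range.1 hj)
    refine ⟨y, (hF _ _ _).2 ?_⟩
    rw [hBtil]
    simp only [Finset.mem_biUnion, Finset.mem_product, Finset.mem_singleton]
    exact ⟨j, hj, rfl, hy⟩
  have c1 := hFS Btil A hBA
  have c2 := hFS (Btil + Btil) (A + A) (by
    intro p hp
    obtain ⟨u, hu, v, hv, rfl⟩ := Finset.mem_add.1 hp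
    exact Finset.add_mem_add (hBA u hu) (hBA v hv))
  have : 5 * Btil.card ≤ 2 * (Btil + Btil).card := by
    rw [c1, c2, Finset.mul_sum, Finset.mul_sum]
    apply Finset.sum_le_sum
    intro t _
    refine (hsub _ (Finset.filter_subset _ _)).trans (Nat.mul_le_mul_left _ (Finset.card_le_card ?_))
    intro z hz
    obtain ⟨u, hu, v, hv, rfl⟩ := Finset.mem_add.1 hz
    obtain ⟨hv1, hv2⟩ := Finset.mem_filter.1 hv
    refine Finset.mem_filter.2 ⟨Finset.add_mem_add hu hv1, hv2.trans_le ?_⟩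
    obtain ⟨y, hy⟩ := hFne u hu
    rw [← Finset.card_vadd_finset y (F Btil v)]
    apply Finset.card_le_card
    intro w hw
    obtain ⟨x, hx, rfl⟩ := Finset.mem_vadd_finset.1 hw
    rw [hF] at hx hy ⊢
    exact Finset.mem_add.2 ⟨_, hy, _, hx, rfl⟩
  omega
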